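/- Let d ∈ ℕ and let L : ℝ⟨X⟩_d → ℝ be a tracial linear functional. Then there exist finitely many scalars λ₁, …, λ_k ∈ ℝ, sizes n₁, …, n_k ∈ ℕ, and tuples A_ℓ ∈ M_{n_ℓ}(ℝ)^g such that L(p) = Σ_{ℓ=1}^k λ_ℓ · tr(p(A_ℓ)) for every p ∈ ℝ⟨X⟩_d; that is, L lies in the linear span of the functionals φ_A. -/

import Mathlib

/-- The subspace `F⟨X⟩_d` of the free algebra spanned by words of length at most `d`. -/
def wordSpan (F : Type*) [Field F] (g d : ℕ) : Submodule F (FreeAlgebra F (Fin g)) :=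
  Submodule.span F
    {x : FreeAlgebra F (Fin g) |
      ∃ w : List (Fin g), w.length ≤ d ∧ x = (w.map (FreeAlgebra.ι F)).prod}

lemma word_mem_wordSpan (F : Type*) [Field F] {g d : ℕ} (w : List (Fin g))
    (hw : w.length ≤ d) : (w.map (FreeAlgebra.ι F)).prod ∈ wordSpan F g d :=
  Submodule.subset_span ⟨w, hw, rfl⟩

/-- A linear functional on `F⟨X⟩_d` is tracial if `L (u * v) = L (v * u)` for all
words `u, v` with `|u| + |v| ≤ d`. -/
def IsTracial {F : Type*} [Field F] {g d : ℕ} (L : wordSpan F g d →ₗ[F] F) : Prop :=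
  ∀ (u v : List (Fin g)) (h : u.length + v.length ≤ d),
    L ⟨((u ++ v).map (FreeAlgebra.ι F)).prod,
        word_mem_wordSpan F (u ++ v) (by rw [List.length_append]; exact h)⟩ =
    L ⟨((v ++ u).map (FreeAlgebra.ι F)).prod,
        word_mem_wordSpan F (v ++ u) (by rw [List.length_append]; omega)⟩

/-!
Extending `L` by zero to all words turns it into a function `f` on words that is invariant under
cyclic rotation. For a word `w` of length `n`, walk around an `n`-cycle whose edges are labelled by
the letters of `w`, and let the matrix attached to a letter collect the edges with that label. The
trace of a word `v` then counts closed walks reading `v`: it vanishes when `0 < |v| < n`, and when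
`|v| = n` it is the number of starting points on the cycle from which one reads `v`. By rotation
invariance, summing these traces over all `w` of length `n` with weights `f w / n` gives a
combination of traces that agrees with `f` on words of length `n` and vanishes on shorter nonempty
words. Hence `f` can be matched length by length, for `n = 1, …, d`. The empty word is corrected
last, by the zero matrix of size one.
-/

section WordFunctions

variable {R α : Type*}

/-- The functions on words that are invariant under cyclic rotation: the tracial functionals on the
whole free algebra, recorded by their values on words. -/
def cyclicFunctions (R α : Type*) [Semiring R] : Submodule R (List α → R) where
  carrier := {f | ∀ u v, f (u ++ v) = f (v ++ u)}
  add_mem' hf hg u v := congrArg₂ (· + ·) (hf u v) (hg u v)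
  zero_mem' _ _ := rfl
  smul_mem' c _ hf u v := congrArg (c • ·) (hf u v)

lemma apply_rotate_of_mem_cyclicFunctions [Semiring R] {f : List α → R}
    (hf : f ∈ cyclicFunctions R α) (v : List α) (k : ℕ) : f (v.rotate k) = f v := by
  rw [List.rotate_eq_drop_append_take_mod, hf, List.take_append_drop]

/-- The function `v ↦ tr (v A)` on words in the matrices `A`. -/
def wordTrace {n : Type*} [Fintype n] [DecidableEq n] [Semiring R] (A : α → Matrix n n R)
    (v : List α) : R :=
  (v.map A).prod.trace

/-- The span of the functions `v ↦ tr (v A)`, for `A` of any finite size. -/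
def wordTraceSpan (R α : Type*) [Semiring R] : Submodule R (List α → R) :=
  Submodule.span R
    (Set.range fun P : Σ n : ℕ, α → Matrix (Fin n) (Fin n) R => wordTrace P.2)

lemma wordTrace_mem_cyclicFunctions {n : Type*} [Fintype n] [DecidableEq n] [CommSemiring R]
    (A : α → Matrix n n R) : wordTrace A ∈ cyclicFunctions R α := fun u v => by
  simp only [wordTrace, List.map_append, List.prod_append]
  exact Matrix.trace_mul_comm _ _

lemma wordTrace_mem_wordTraceSpan [Semiring R] {n : ℕ} (A : α → Matrix (Fin n) (Fin n) R) :
    wordTrace A ∈ wordTraceSpan R α :=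
  Submodule.subset_span ⟨⟨n, A⟩, rfl⟩

lemma wordTraceSpan_le_cyclicFunctions [CommSemiring R] :
    wordTraceSpan R α ≤ cyclicFunctions R α :=
  Submodule.span_le.2 <| Set.range_subset_iff.2 fun P => wordTrace_mem_cyclicFunctions P.2

end WordFunctions

section CycleMatrices

open scoped Fin.CommRing

variable {α : Type*} {n : ℕ} [NeZero n]

/-- The word of length `m` read along the cyclic word `w` from position `i`; it wraps around. -/
def cyclicFactor (w : Fin n → α) (i : Fin n) (m : ℕ) : List α :=
  (List.range m).map fun k : ℕ => w (i + (k : Fin n))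

lemma cyclicFactor_succ (w : Fin n → α) (i : Fin n) (m : ℕ) :
    cyclicFactor w i (m + 1) = w i :: cyclicFactor w (i + 1) m := by
  simp [cyclicFactor, List.range_succ_eq_map, Function.comp_def, add_assoc, add_comm (1 : Fin n)]

lemma cyclicFactor_full (w : Fin n → α) (i : Fin n) :
    cyclicFactor w i n = List.ofFn fun k => w (i + k) := by
  simp [cyclicFactor, List.ofFn_eq_map, ← List.map_coe_finRange_eq_range]

omit [NeZero n] in
lemma ofFn_add_left_eq_rotate (w : Fin n → α) (i : Fin n) :
    (List.ofFn fun k => w (i + k)) = (List.ofFn w).rotate i := by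
  refine List.ext_getElem (by simp) fun k _ _ => ?_
  simp only [List.getElem_ofFn, List.getElem_rotate, List.length_ofFn]
  congr 1
  simp [Fin.ext_iff, Fin.val_add, add_comm]

open Classical in
/-- The adjacency matrices of the directed `n`-cycle whose edge `i → i + 1` is labelled `w i`: the
matrix of the letter `x` keeps the edges labelled `x`. -/
noncomputable def cycleMatrix (R : Type*) [Zero R] [One R] (w : Fin n → α) (x : α) :
    Matrix (Fin n) (Fin n) R :=
  Matrix.of fun i j => if w i = x ∧ j = i + 1 then 1 else 0

variable {R : Type*} [Semiring R]

open Classical in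
lemma prod_map_cycleMatrix_apply (w : Fin n → α) (v : List α) (i j : Fin n) :
    (v.map (cycleMatrix R w)).prod i j =
      if v = cyclicFactor w i v.length ∧ j = i + v.length then 1 else 0 := by
  induction v generalizing i with
  | nil => simp [cyclicFactor, Matrix.one_apply, eq_comm]
  | cons x v ih =>
    rw [List.map_cons, List.prod_cons, Matrix.mul_apply, Finset.sum_eq_single (i + 1)]
    · have hshift : i + 1 + (v.length : Fin n) = i + ((v.length + 1 : ℕ) : Fin n) := by
        push_cast; ring
      rw [ih, List.length_cons, cyclicFactor_succ, hshift]
      by_cases hx : w i = x <;> simp [cycleMatrix, hx, eq_comm (a := x)]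
    · intro k _ hk
      simp [cycleMatrix, hk]
    · simp

lemma wordTrace_cycleMatrix_of_length_lt (w : Fin n → α) {v : List α} (hv : v ≠ [])
    (hvn : v.length < n) : wordTrace (cycleMatrix R w) v = 0 := by
  have hlen : (v.length : Fin n) ≠ 0 := by
    rw [Ne, Fin.natCast_eq_zero]
    exact Nat.not_dvd_of_pos_of_lt (List.length_pos_iff.2 hv) hvn
  rw [wordTrace, Matrix.trace]
  refine Finset.sum_eq_zero fun i _ => ?_
  rw [Matrix.diag_apply, prod_map_cycleMatrix_apply, if_neg]
  simp [hlen]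

open Classical in
lemma wordTrace_cycleMatrix_of_length_eq (w : Fin n → α) {v : List α} (hv : v.length = n) :
    wordTrace (cycleMatrix R w) v =
      ∑ i, if v = List.ofFn fun k => w (i + k) then 1 else 0 := by
  simp only [wordTrace, Matrix.trace, Matrix.diag_apply, prod_map_cycleMatrix_apply, hv,
    cyclicFactor_full, Fin.natCast_self, add_zero, and_true]

lemma sum_mul_wordTrace_cycleMatrix [Fintype α] {f : List α → R} (hf : f ∈ cyclicFunctions R α)
    {v : List α} (hv : v.length = n) :
    ∑ w : Fin n → α, f (List.ofFn w) * wordTrace (cycleMatrix R w) v = n * f v := by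
  classical
  obtain ⟨v, rfl⟩ : ∃ v' : Fin n → α, List.ofFn v' = v := by
    subst hv
    exact ⟨v.get, List.ofFn_get v⟩
  have rotated (i : Fin n) :
      ∑ w : Fin n → α, f (List.ofFn w) *
        (if List.ofFn v = List.ofFn fun k => w (i + k) then 1 else 0) = f (List.ofFn v) :=
    calc
      _ = ∑ w : Fin n → α, f (List.ofFn fun k => w (i + k)) *
            (if List.ofFn v = List.ofFn fun k => w (i + k) then 1 else 0) := by
        simp only [ofFn_add_left_eq_rotate, apply_rotate_of_mem_cyclicFunctions hf]
      _ = ∑ w : Fin n → α, f (List.ofFn w) * (if List.ofFn v = List.ofFn w then 1 else 0) :=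
        ((Equiv.addLeft i).symm.arrowCongr (Equiv.refl α)).sum_comp fun w =>
          f (List.ofFn w) * (if List.ofFn v = List.ofFn w then 1 else 0)
      _ = f (List.ofFn v) := by simp [List.ofFn_inj]
  simp only [wordTrace_cycleMatrix_of_length_eq _ hv, Finset.mul_sum]
  rw [Finset.sum_comm]
  simp only [rotated, Finset.sum_const, Finset.card_univ, Fintype.card_fin, nsmul_eq_mul]

end CycleMatrices

section Approximation

variable {F α : Type*} [Field F] [Finite α]

lemma exists_mem_wordTraceSpan_eq_of_length_eq {n : ℕ} (hn : (n : F) ≠ 0) {f : List α → F}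
    (hf : f ∈ cyclicFunctions F α) :
    ∃ h ∈ wordTraceSpan F α, (∀ v, v.length = n → h v = f v) ∧
      ∀ v, v ≠ [] → v.length < n → h v = 0 := by
  cases nonempty_fintype α
  have : NeZero n := ⟨by rintro rfl; exact hn Nat.cast_zero⟩
  refine ⟨(n : F)⁻¹ • ∑ w : Fin n → α, f (List.ofFn w) • wordTrace (cycleMatrix F w),
    Submodule.smul_mem _ _ <| Submodule.sum_mem _ fun w _ =>
      Submodule.smul_mem _ _ (wordTrace_mem_wordTraceSpan _), fun v hv => ?_, fun v hv hvn => ?_⟩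
  · simp only [Pi.smul_apply, Finset.sum_apply, smul_eq_mul, sum_mul_wordTrace_cycleMatrix hf hv,
      inv_mul_cancel_left₀ hn]
  · simp [wordTrace_cycleMatrix_of_length_lt _ hv hvn]

lemma exists_mem_wordTraceSpan_eq_of_ne_nil {d : ℕ} (hd : (d.factorial : F) ≠ 0)
    {f : List α → F} (hf : f ∈ cyclicFunctions F α) :
    ∃ h ∈ wordTraceSpan F α, ∀ v, v ≠ [] → v.length ≤ d → h v = f v := by
  induction d with
  | zero => exact ⟨0, zero_mem _, fun v hv hv0 => absurd (List.length_eq_zero_iff.1 (by omega)) hv⟩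
  | succ d ih =>
    rw [Nat.factorial_succ, Nat.cast_mul] at hd
    obtain ⟨h, hh, h_eq⟩ := ih (right_ne_zero_of_mul hd)
    obtain ⟨h', hh', h'_eq, h'_short⟩ := exists_mem_wordTraceSpan_eq_of_length_eq
      (left_ne_zero_of_mul hd) (sub_mem hf (wordTraceSpan_le_cyclicFunctions hh))
    refine ⟨h + h', add_mem hh hh', fun v hv hvd => ?_⟩
    rcases hvd.lt_or_eq with hlt | heq
    · simp [h_eq v hv (Nat.lt_succ_iff.1 hlt), h'_short v hv hlt]
    · simp [h'_eq v heq]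

lemma exists_mem_wordTraceSpan_eq_of_length_le {d : ℕ} (hd : (d.factorial : F) ≠ 0)
    {f : List α → F} (hf : f ∈ cyclicFunctions F α) :
    ∃ h ∈ wordTraceSpan F α, ∀ v, v.length ≤ d → h v = f v := by
  obtain ⟨h, hh, h_eq⟩ := exists_mem_wordTraceSpan_eq_of_ne_nil hd hf
  let zeroTrace : List α → F := wordTrace (0 : α → Matrix (Fin 1) (Fin 1) F)
  refine ⟨h + (f [] - h []) • zeroTrace,
    add_mem hh (Submodule.smul_mem _ _ (wordTrace_mem_wordTraceSpan _)), fun v hv => ?_⟩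
  cases v with
  | nil => simp [zeroTrace, wordTrace]
  | cons x v => simp [zeroTrace, wordTrace, h_eq _ (List.cons_ne_nil x v) hv]

end Approximation

section FreeAlgebra

variable {F : Type*} [Field F] {g d : ℕ}

/-- The values of a functional on words, extended by zero to the words of length greater than `d`;
linear in the functional. -/
noncomputable def wordValue : (wordSpan F g d →ₗ[F] F) →ₗ[F] List (Fin g) → F :=
  LinearMap.pi fun v =>
    if hv : v.length ≤ d then
      LinearMap.applyₗ ⟨(v.map (FreeAlgebra.ι F)).prod, word_mem_wordSpan F v hv⟩
    else 0

lemma IsTracial.wordValue_mem_cyclicFunctions {L : wordSpan F g d →ₗ[F] F} (hL : IsTracial L) :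
    wordValue L ∈ cyclicFunctions F (Fin g) := fun u v => by
  by_cases huv : u.length + v.length ≤ d
  · simpa [wordValue, huv, add_comm v.length] using hL u v huv
  · simp [wordValue, huv, add_comm v.length]

lemma wordSpan_linearMap_ext {L M : wordSpan F g d →ₗ[F] F}
    (h : ∀ v : List (Fin g), v.length ≤ d → wordValue L v = wordValue M v) : L = M := by
  rw [Submodule.linearMap_eq_iff_of_eq_span L M rfl]
  rintro ⟨_, v, hv, rfl⟩
  simpa [wordValue, hv] using h v hv

/-- The functional `φ_A : p ↦ tr (p A)` on `F⟨X⟩_d`. -/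
def traceFunctional {n : Type*} [Fintype n] [DecidableEq n] (d : ℕ) (A : Fin g → Matrix n n F) :
    wordSpan F g d →ₗ[F] F :=
  Matrix.traceLinearMap n F F ∘ₗ (FreeAlgebra.lift F A).toLinearMap ∘ₗ (wordSpan F g d).subtype

lemma wordValue_traceFunctional {n : Type*} [Fintype n] [DecidableEq n]
    (A : Fin g → Matrix n n F) {v : List (Fin g)} (hv : v.length ≤ d) :
    wordValue (traceFunctional d A) v = wordTrace A v := by
  simp [wordValue, hv, traceFunctional, wordTrace, map_list_prod, Function.comp_def]

theorem tracial_functional_is_combination_of_traces_general (hd : (d.factorial : F) ≠ 0)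
    (L : wordSpan F g d →ₗ[F] F) (hL : IsTracial L) :
    ∃ (k : ℕ) (lam : Fin k → F) (sz : Fin k → ℕ)
      (A : (ℓ : Fin k) → Fin g → Matrix (Fin (sz ℓ)) (Fin (sz ℓ)) F),
      ∀ p : wordSpan F g d,
        L p = ∑ ℓ : Fin k,
          lam ℓ * Matrix.trace (FreeAlgebra.lift F (A ℓ) (p : FreeAlgebra F (Fin g))) := by
  obtain ⟨h, hh, h_eq⟩ :=
    exists_mem_wordTraceSpan_eq_of_length_le hd hL.wordValue_mem_cyclicFunctions
  obtain ⟨k, lam, G, rfl⟩ := Submodule.mem_span_set'.1 hh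
  choose P hP using fun ℓ => (G ℓ).2
  have hL_eq : L = ∑ ℓ, lam ℓ • traceFunctional d (P ℓ).2 := by
    refine wordSpan_linearMap_ext fun v hv => ?_
    simp only [← h_eq v hv, map_sum, map_smul, Finset.sum_apply, Pi.smul_apply,
      wordValue_traceFunctional _ hv, hP]
  refine ⟨k, lam, fun ℓ => (P ℓ).1, fun ℓ => (P ℓ).2, fun p => ?_⟩
  simp [hL_eq, traceFunctional]

end FreeAlgebra

/-- Every tracial linear functional on `ℝ⟨X⟩_d` is a linear combination of the
functionals `p ↦ tr (p A)` for tuples of real matrices `A`. -/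
theorem tracial_functional_is_combination_of_traces (g d : ℕ)
    (L : wordSpan ℝ g d →ₗ[ℝ] ℝ) (hL : IsTracial L) :
    ∃ (k : ℕ) (lam : Fin k → ℝ) (sz : Fin k → ℕ)
      (A : (ℓ : Fin k) → Fin g → Matrix (Fin (sz ℓ)) (Fin (sz ℓ)) ℝ),
      ∀ p : wordSpan ℝ g d,
        L p = ∑ ℓ : Fin k,
          lam ℓ * Matrix.trace (FreeAlgebra.lift ℝ (A ℓ) (p : FreeAlgebra ℝ (Fin g))) :=
  tracial_functional_is_combination_of_traces_general (Nat.cast_ne_zero.2 d.factorial_ne_zero) L hL
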